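/- At every point of Ω, the Riemann curvature tensor of a Hessian metric is the quadratic expression in the difference tensor: R^i_{jkl} = Σ_r (Γ^i_{lr}Γ^r_{jk} − Γ^i_{kr}Γ^r_{jl}). -/

import Mathlib

/-!
Write `Γ_k` and `γ_k` for the matrices `(Γ^i_{kj})_{ij}` and `(γ_{ikj})_{ij}`, so that `g Γ_l = γ_l`
on `Ω`. Because `g` is a Hessian, `∂_k g = 2 γ_k` and `∂_k γ_l = ∂_l γ_k`. Differentiating
`g Γ_l = γ_l` gives `g ∂_k Γ_l = ∂_k γ_l - 2 γ_k Γ_l` (`sum_gmet_mul_pd_Chr`); antisymmetrizing in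
`k, l` kills the fourth derivatives of `φ`, and multiplying by `g⁻¹` yields
`∂_k Γ_l - ∂_l Γ_k = -2 [Γ_k, Γ_l]` (`pd_Chr_sub_pd_Chr`). Adding the quadratic part `[Γ_k, Γ_l]` of
the curvature leaves `[Γ_l, Γ_k]`, which is the claim by the symmetry of `Γ` in its lower indices.
-/

noncomputable section

/-- Partial derivative in the `i`-th coordinate direction. -/
def pd {n : ℕ} (i : Fin n) (f : (Fin n → ℝ) → ℝ) : (Fin n → ℝ) → ℝ :=
  fun x => fderiv ℝ f x (Pi.single i 1)

variable {n : ℕ}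

/-- The Hessian metric `g_{ij} = ∂_i ∂_j φ`. -/
def gmet (φ : (Fin n → ℝ) → ℝ) (x : Fin n → ℝ) : Matrix (Fin n) (Fin n) ℝ :=
  fun i j => pd i (pd j φ) x

/-- The inverse metric `g^{ij}`. -/
def gi (φ : (Fin n → ℝ) → ℝ) (x : Fin n → ℝ) : Matrix (Fin n) (Fin n) ℝ :=
  (gmet φ x)⁻¹

/-- The lowered difference tensor `γ_{ijk} = (1/2) ∂_i∂_j∂_k φ`. -/
def gam (φ : (Fin n → ℝ) → ℝ) (i j k : Fin n) : (Fin n → ℝ) → ℝ :=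
  fun x => (1 / 2) * pd i (pd j (pd k φ)) x

/-- The Christoffel symbols `Γ^i_{jk} = Σ_p g^{ip} γ_{pjk}`. -/
def Chr (φ : (Fin n → ℝ) → ℝ) (i j k : Fin n) : (Fin n → ℝ) → ℝ :=
  fun x => ∑ p, gi φ x i p * gam φ p j k x

/-- The first Koszul form `α_i = Σ_{r,p} g^{rp} γ_{pri}`. -/
def alph (φ : (Fin n → ℝ) → ℝ) (i : Fin n) : (Fin n → ℝ) → ℝ :=
  fun x => ∑ r, ∑ p, gi φ x r p * gam φ p r i x

/-- The second Koszul form `β_{ij} = ∂_i α_j`. -/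
def bet (φ : (Fin n → ℝ) → ℝ) (i j : Fin n) : (Fin n → ℝ) → ℝ :=
  pd i (alph φ j)

/-- Covariant derivative of the first Koszul form `∇_i α_j`. -/
def covAlpha (φ : (Fin n → ℝ) → ℝ) (i j : Fin n) : (Fin n → ℝ) → ℝ :=
  fun x => bet φ i j x - ∑ r, Chr φ r i j x * alph φ r x

/-- Covariant derivative of a covector field `∇_i X_j`. -/
def covCo (φ : (Fin n → ℝ) → ℝ) (X : Fin n → (Fin n → ℝ) → ℝ) (i j : Fin n) :
    (Fin n → ℝ) → ℝ :=
  fun x => pd i (X j) x - ∑ r, Chr φ r i j x * X r x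

/-- The Hessian `∇_i∇_j f` of a function. -/
def covHess (φ f : (Fin n → ℝ) → ℝ) (i j : Fin n) : (Fin n → ℝ) → ℝ :=
  fun x => pd i (pd j f) x - ∑ r, Chr φ r i j x * pd r f x

/-- Covariant derivative of the difference tensor `∇_i γ_{jkl}`. -/
def covGam (φ : (Fin n → ℝ) → ℝ) (i j k l : Fin n) : (Fin n → ℝ) → ℝ :=
  fun x => pd i (gam φ j k l) x -
    ∑ r, (Chr φ r i j x * gam φ r k l x + Chr φ r i k x * gam φ j r l x +
      Chr φ r i l x * gam φ j k r x)

/-- Second covariant derivative of the first Koszul form `∇_i∇_j α_k`. -/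
def cov2Alpha (φ : (Fin n → ℝ) → ℝ) (i j k : Fin n) : (Fin n → ℝ) → ℝ :=
  fun x => pd i (covAlpha φ j k) x -
    ∑ r, (Chr φ r i j x * covAlpha φ r k x + Chr φ r i k x * covAlpha φ j r x)

/-- The curvature tensor `R^i_{jkl}`. -/
def Riem (φ : (Fin n → ℝ) → ℝ) (i j k l : Fin n) : (Fin n → ℝ) → ℝ :=
  fun x => pd k (Chr φ i l j) x - pd l (Chr φ i k j) x +
    ∑ r, (Chr φ i k r x * Chr φ r l j x - Chr φ i l r x * Chr φ r k j x)

/-- The Ricci tensor `R_{jk} = Σ_s R^s_{jsk}`. -/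
def Ricci (φ : (Fin n → ℝ) → ℝ) (j k : Fin n) : (Fin n → ℝ) → ℝ :=
  fun x => ∑ s, Riem φ s j s k x

/-- The scalar curvature `R = Σ g^{jk} R_{jk}`. -/
def Scal (φ : (Fin n → ℝ) → ℝ) : (Fin n → ℝ) → ℝ :=
  fun x => ∑ j, ∑ k, gi φ x j k * Ricci φ j k x

/-- The Laplace–Beltrami operator of `g`. -/
def lap (φ u : (Fin n → ℝ) → ℝ) : (Fin n → ℝ) → ℝ :=
  fun x => ∑ i, ∑ j, gi φ x i j * (pd i (pd j u) x - ∑ k, Chr φ k i j x * pd k u x)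

/-- `|α|²`. -/
def normAlphaSq (φ : (Fin n → ℝ) → ℝ) : (Fin n → ℝ) → ℝ :=
  fun x => ∑ i, ∑ j, gi φ x i j * alph φ i x * alph φ j x

/-- `|γ|²`. -/
def normGamSq (φ : (Fin n → ℝ) → ℝ) : (Fin n → ℝ) → ℝ :=
  fun x => ∑ i, ∑ i', ∑ j, ∑ j', ∑ k, ∑ k',
    gi φ x i i' * gi φ x j j' * gi φ x k k' * gam φ i j k x * gam φ i' j' k' x

/-- `|∇γ|²`. -/
def normCovGamSq (φ : (Fin n → ℝ) → ℝ) : (Fin n → ℝ) → ℝ :=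
  fun x => ∑ i, ∑ i', ∑ j, ∑ j', ∑ k, ∑ k', ∑ l, ∑ l',
    gi φ x i i' * gi φ x j j' * gi φ x k k' * gi φ x l l' *
      covGam φ i j k l x * covGam φ i' j' k' l' x

/-- `|Rm|²` (the upper index is lowered with `g`). -/
def normRmSq (φ : (Fin n → ℝ) → ℝ) : (Fin n → ℝ) → ℝ :=
  fun x => ∑ i, ∑ i', ∑ j, ∑ j', ∑ k, ∑ k', ∑ l, ∑ l',
    gmet φ x i i' * gi φ x j j' * gi φ x k k' * gi φ x l l' *
      Riem φ i j k l x * Riem φ i' j' k' l' x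

/-- `|Ric|²`. -/
def normRicSq (φ : (Fin n → ℝ) → ℝ) : (Fin n → ℝ) → ℝ :=
  fun x => ∑ j, ∑ j', ∑ k, ∑ k',
    gi φ x j j' * gi φ x k k' * Ricci φ j k x * Ricci φ j' k' x

/-- The full contraction `Σ R_{ij} β_{ij}`. -/
def ricBeta (φ : (Fin n → ℝ) → ℝ) : (Fin n → ℝ) → ℝ :=
  fun x => ∑ i, ∑ i', ∑ j, ∑ j',
    gi φ x i i' * gi φ x j j' * Ricci φ i j x * bet φ i' j' x

/-- The full contraction `Σ R_{ij} ∇_i α_j`. -/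
def ricCovAlpha (φ : (Fin n → ℝ) → ℝ) : (Fin n → ℝ) → ℝ :=
  fun x => ∑ i, ∑ i', ∑ j, ∑ j',
    gi φ x i i' * gi φ x j j' * Ricci φ i j x * covAlpha φ i' j' x

/-- The full contraction `Σ (∇_i∇_j α_k) γ_{ijk}`. -/
def cov2AlphaGam (φ : (Fin n → ℝ) → ℝ) : (Fin n → ℝ) → ℝ :=
  fun x => ∑ i, ∑ i', ∑ j, ∑ j', ∑ k, ∑ k',
    gi φ x i i' * gi φ x j j' * gi φ x k k' * cov2Alpha φ i j k x * gam φ i' j' k' x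

variable {n : ℕ}

theorem contDiff_pd {f : (Fin n → ℝ) → ℝ} (hf : ContDiff ℝ (⊤ : ℕ∞) f) (i : Fin n) :
    ContDiff ℝ (⊤ : ℕ∞) (pd i f) := by
  have h : ContDiff ℝ (⊤ : ℕ∞) (fderiv ℝ f) := hf.fderiv_right (by simp)
  exact h.clm_apply contDiff_const

theorem pd_comm {f : (Fin n → ℝ) → ℝ} (hf : ContDiff ℝ (⊤ : ℕ∞) f) (i j : Fin n) :
    pd i (pd j f) = pd j (pd i f) := by
  have hd : Differentiable ℝ (fderiv ℝ f) :=
    (hf.fderiv_right (m := (⊤ : ℕ∞)) (by simp)).differentiable (by simp)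
  have key : ∀ (a b : Fin n) x, pd a (pd b f) x
      = fderiv ℝ (fderiv ℝ f) x (Pi.single a 1) (Pi.single b 1) := by
    intro a b x
    change fderiv ℝ (fun y => fderiv ℝ f y (Pi.single b 1)) x (Pi.single a 1) = _
    rw [fderiv_clm_apply (hd x) (differentiableAt_const _)]
    simp
  funext x
  rw [key, key]
  have hs : IsSymmSndFDerivAt ℝ f x :=
    hf.contDiffAt.isSymmSndFDerivAt (by
      simp only [minSmoothness_of_isRCLikeNormedField]; exact WithTop.coe_le_coe.2 le_top)
  exact hs _ _

theorem contDiff_gmet {φ : (Fin n → ℝ) → ℝ} (hφ : ContDiff ℝ (⊤ : ℕ∞) φ) (i j : Fin n) :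
    ContDiff ℝ (⊤ : ℕ∞) (fun x => gmet φ x i j) :=
  contDiff_pd (contDiff_pd hφ j) i

theorem contDiff_gam {φ : (Fin n → ℝ) → ℝ} (hφ : ContDiff ℝ (⊤ : ℕ∞) φ) (i j k : Fin n) :
    ContDiff ℝ (⊤ : ℕ∞) (gam φ i j k) :=
  contDiff_const.mul (contDiff_pd (contDiff_pd (contDiff_pd hφ k) j) i)

theorem differentiable_det {A : (Fin n → ℝ) → Matrix (Fin n) (Fin n) ℝ}
    (hA : ∀ i j, Differentiable ℝ (fun x => A x i j)) :
    Differentiable ℝ (fun x => (A x).det) := by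
  simp only [Matrix.det_apply']
  fun_prop

/-- Cramer's rule expresses the entries of `g⁻¹` as quotients of polynomials in those of `g`. -/
theorem differentiableAt_gi {φ : (Fin n → ℝ) → ℝ} (hφ : ContDiff ℝ (⊤ : ℕ∞) φ)
    {x : Fin n → ℝ} (hx : (gmet φ x).det ≠ 0) (i j : Fin n) :
    DifferentiableAt ℝ (fun y => gi φ y i j) x := by
  have hg : ∀ i j, Differentiable ℝ (fun x => gmet φ x i j) := fun i j =>
    (contDiff_gmet hφ i j).differentiable (by simp)
  simp only [gi, Matrix.inv_def, Matrix.smul_apply, Ring.inverse_eq_inv', smul_eq_mul,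
    Matrix.adjugate_apply]
  refine ((differentiable_det hg x).inv hx).mul (differentiable_det (fun a b => ?_) x)
  by_cases h : a = j
  · subst h
    simp
  · simpa [Matrix.updateRow_ne h] using hg a b

theorem differentiableAt_Chr {φ : (Fin n → ℝ) → ℝ} (hφ : ContDiff ℝ (⊤ : ℕ∞) φ)
    {x : Fin n → ℝ} (hx : (gmet φ x).det ≠ 0) (i j k : Fin n) :
    DifferentiableAt ℝ (Chr φ i j k) x :=
  DifferentiableAt.fun_sum fun p _ => (differentiableAt_gi hφ hx i p).mul
    ((contDiff_gam hφ p j k).differentiable (by simp) x)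

theorem gam_comm₂₃ {φ : (Fin n → ℝ) → ℝ} (hφ : ContDiff ℝ (⊤ : ℕ∞) φ) (i j k : Fin n) :
    gam φ i j k = gam φ i k j := by
  unfold gam
  rw [pd_comm hφ j k]

theorem Chr_comm {φ : (Fin n → ℝ) → ℝ} (hφ : ContDiff ℝ (⊤ : ℕ∞) φ) (i j k : Fin n) :
    Chr φ i j k = Chr φ i k j := by
  unfold Chr
  simp only [gam_comm₂₃ hφ _ j k]

theorem pd_gmet {φ : (Fin n → ℝ) → ℝ} (hφ : ContDiff ℝ (⊤ : ℕ∞) φ) (k i j : Fin n)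
    (x : Fin n → ℝ) : pd k (fun y => gmet φ y i j) x = 2 * gam φ i k j x := by
  have h : (fun y => gmet φ y i j) = pd i (pd j φ) := rfl
  rw [h, pd_comm (contDiff_pd hφ j) k i]
  simp only [gam]
  ring

theorem pd_gam_comm {φ : (Fin n → ℝ) → ℝ} (hφ : ContDiff ℝ (⊤ : ℕ∞) φ) (k l i j : Fin n)
    (x : Fin n → ℝ) : pd k (gam φ i l j) x = pd l (gam φ i k j) x := by
  have hmul : ∀ a b, pd a (gam φ i b j) x = (1 / 2) * pd a (pd i (pd b (pd j φ))) x := by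
    intro a b
    have hd : DifferentiableAt ℝ (pd i (pd b (pd j φ))) x :=
      (contDiff_pd (contDiff_pd (contDiff_pd hφ j) b) i).differentiable (by simp) x
    change fderiv ℝ (fun y => (1 / 2) * pd i (pd b (pd j φ)) y) x (Pi.single a 1) = _
    rw [fderiv_const_mul hd]
    simp [pd]
  have hj := contDiff_pd hφ j
  rw [hmul, hmul, pd_comm (contDiff_pd hj l) k i, pd_comm (contDiff_pd hj k) l i,
    pd_comm hj k l]

theorem sum_gmet_mul_Chr {φ : (Fin n → ℝ) → ℝ} {x : Fin n → ℝ} (hx : (gmet φ x).det ≠ 0)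
    (i l j : Fin n) : ∑ q, gmet φ x i q * Chr φ q l j x = gam φ i l j x := by
  have h : gmet φ x * (gi φ x * Matrix.of fun p j => gam φ p l j x)
      = Matrix.of fun p j => gam φ p l j x :=
    Matrix.mul_nonsing_inv_cancel_left _ _ hx.isUnit
  exact congrFun (congrFun h i) j

/-- The derivative of `g Γ_l = γ_l`, an identity which holds on a neighbourhood of any point
where `g` is invertible. -/
theorem sum_gmet_mul_pd_Chr {φ : (Fin n → ℝ) → ℝ} (hφ : ContDiff ℝ (⊤ : ℕ∞) φ)
    {x : Fin n → ℝ} (hx : (gmet φ x).det ≠ 0) (i j k l : Fin n) :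
    ∑ q, gmet φ x i q * pd k (Chr φ q l j) x
      = pd k (gam φ i l j) x - 2 * ∑ q, gam φ i k q x * Chr φ q l j x := by
  have hg : ∀ i j, Differentiable ℝ (fun x => gmet φ x i j) := fun i j =>
    (contDiff_gmet hφ i j).differentiable (by simp)
  have hev : (fun y => ∑ q, gmet φ y i q * Chr φ q l j y) =ᶠ[nhds x] gam φ i l j := by
    filter_upwards [(differentiable_det hg).continuous.continuousAt.eventually_ne hx] with y hy
    exact sum_gmet_mul_Chr hy i l j
  have hd : pd k (fun y => ∑ q, gmet φ y i q * Chr φ q l j y) x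
      = ∑ q, (gmet φ x i q * pd k (Chr φ q l j) x
        + Chr φ q l j x * pd k (fun y => gmet φ y i q) x) := by
    simp only [pd]
    rw [fderiv_fun_sum fun q _ => (hg i q x).fun_mul (differentiableAt_Chr hφ hx q l j),
      sum_apply]
    refine Finset.sum_congr rfl fun q _ => ?_
    rw [fderiv_fun_mul (hg i q x) (differentiableAt_Chr hφ hx q l j)]
    simp
  have he : pd k (fun y => ∑ q, gmet φ y i q * Chr φ q l j y) x = pd k (gam φ i l j) x := by
    simp only [pd]
    rw [hev.fderiv_eq]
  rw [← he, hd, Finset.sum_add_distrib, Finset.mul_sum, add_sub_assoc, left_eq_add, sub_eq_zero]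
  refine Finset.sum_congr rfl fun q _ => ?_
  rw [pd_gmet hφ]
  ring

/-- The derivative part of the curvature: `∂_k Γ_l - ∂_l Γ_k = -2 [Γ_k, Γ_l]`. -/
theorem pd_Chr_sub_pd_Chr {φ : (Fin n → ℝ) → ℝ} (hφ : ContDiff ℝ (⊤ : ℕ∞) φ)
    {x : Fin n → ℝ} (hx : (gmet φ x).det ≠ 0) (i j k l : Fin n) :
    pd k (Chr φ i l j) x - pd l (Chr φ i k j) x
      = -2 * (∑ r, Chr φ i k r x * Chr φ r l j x - ∑ r, Chr φ i l r x * Chr φ r k j x) := by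
  let C : Fin n → Matrix (Fin n) (Fin n) ℝ := fun k => Matrix.of fun i j => Chr φ i k j x
  let G : Fin n → Matrix (Fin n) (Fin n) ℝ := fun k => Matrix.of fun i j => gam φ i k j x
  let D : Fin n → Fin n → Matrix (Fin n) (Fin n) ℝ :=
    fun k l => Matrix.of fun i j => pd k (Chr φ i l j) x
  have hC : ∀ k, gmet φ x * C k = G k := fun k => by
    ext i j
    exact sum_gmet_mul_Chr hx i k j
  have hD : gmet φ x * (D k l - D l k)
      = gmet φ x * ((-2 : ℝ) • (C k * C l - C l * C k)) := by
    rw [Matrix.mul_smul, Matrix.mul_sub, Matrix.mul_sub, ← Matrix.mul_assoc, ← Matrix.mul_assoc,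
      hC, hC]
    ext i j
    have h1 := sum_gmet_mul_pd_Chr hφ hx i j k l
    have h2 := sum_gmet_mul_pd_Chr hφ hx i j l k
    have h3 := pd_gam_comm hφ k l i j x
    simp only [Matrix.sub_apply, Matrix.smul_apply, Matrix.mul_apply, smul_eq_mul, C, D, G,
      Matrix.of_apply]
    linarith
  have h := congrArg (fun M => (gmet φ x)⁻¹ * M) hD
  simp only [Matrix.nonsing_inv_mul_cancel_left _ _ hx.isUnit] at h
  exact congrFun (congrFun h i) j

theorem riem_of_hessian_metric {n : ℕ} (hn : 1 ≤ n) (φ : (Fin n → ℝ) → ℝ)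
    (hφ : ContDiff ℝ (⊤ : ℕ∞) φ) (Ω : Set (Fin n → ℝ)) (hΩ : IsOpen Ω)
    (hconn : IsConnected Ω) (hpos : ∀ x ∈ Ω, (gmet φ x).PosDef) :
    ∀ x ∈ Ω, ∀ i j k l,
      Riem φ i j k l x
        = ∑ r, (Chr φ i l r x * Chr φ r j k x - Chr φ i k r x * Chr φ r j l x) := by
  intro x hx i j k l
  have hdet : (gmet φ x).det ≠ 0 := (hpos x hx).det_pos.ne'
  simp only [Riem]
  rw [pd_Chr_sub_pd_Chr hφ hdet, Finset.sum_sub_distrib, Finset.sum_sub_distrib]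
  simp only [Chr_comm hφ _ j k, Chr_comm hφ _ j l]
  ring


end
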